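/- Let C and D be types and define h : C ⊕ D → Set (PMF C) by h(inl c) = {PMF.pure c} and h(inr d) = ∅. Then for every set U of finitely supported PMFs on C ⊕ D, the Kleisli extension h^$(U) := { φ.bind (fun w => (Φ w).bind id) | φ ∈ U, and Φ assigns to each w in the support of φ a finitely supported PMF on (PMF C) with (Φ w).support ⊆ h(w) } satisfies h^$(U) = { ψ : PMF C | ψ is finitely supported and ψ.map Sum.inl ∈ U }. In other words, composition with h in the Kleisli category of ~PD filters out exactly those members of U whose support meets the right summand D, and relabels the remaining ones. -/

import Mathlib

/-! Every `w` in the support of `φ` must be some `inl c`, since no PMF has empty support, and there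
the constraint `(Φ w).support ⊆ {pure c}` forces `Φ w = pure (pure c)`. So relabelling the flattened
value along `inl` turns the bind into `φ.bind pure = φ`. Conversely `ψ` is the flattening of
`ψ.map inl` along the point masses at `pure c`; the choice made on the right summand is
irrelevant, as it lies outside the support. -/

/-- Kleisli extension for the composite monad `~PD` of full powerset over the
finite distribution monad. -/
def kextD {Y Z : Type*} (h : Y → Set (PMF Z)) (U : Set (PMF Y)) : Set (PMF Z) :=
  { χ | ∃ φ ∈ U, ∃ Φ : Y → PMF (PMF Z),
      (∀ w ∈ φ.support, (Φ w).support.Finite ∧ (Φ w).support ⊆ h w) ∧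
      χ = φ.bind fun w => (Φ w).bind id }

theorem PMF.eq_pure_of_support_subset {A : Type*} (p : PMF A) (a : A)
    (hp : p.support ⊆ {a}) : p = PMF.pure a := by
  have hs : p.support = {a} := (p.support_nonempty.subset_singleton_iff).1 hp
  ext b
  by_cases hb : b = a
  · subst hb
    simpa using (p.apply_eq_one_iff b).2 hs
  · rw [PMF.pure_apply_of_ne _ _ hb, PMF.apply_eq_zero_iff, hs]
    exact hb

theorem PMF.bind_congr_support {A B : Type*} (p : PMF A) (f g : A → PMF B)
    (hfg : ∀ a ∈ p.support, f a = g a) : p.bind f = p.bind g := by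
  ext b
  simp only [PMF.bind_apply]
  refine tsum_congr fun a => ?_
  by_cases ha : p a = 0
  · simp [ha]
  · rw [hfg a ((p.mem_support_iff a).2 ha)]

/-- Composition with `h` (where `h (inl c) = {pure c}` and `h (inr d) = ∅`) in
the Kleisli category of `~PD` filters out the members of `U` whose support meets
the right summand `D`, and relabels the remaining ones. -/
theorem stmt19 {C D : Type*} (h : C ⊕ D → Set (PMF C))
    (hinl : ∀ c : C, h (Sum.inl c) = {PMF.pure c}) (hinr : ∀ d : D, h (Sum.inr d) = ∅)
    (U : Set (PMF (C ⊕ D))) (hU : ∀ φ ∈ U, φ.support.Finite) :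
    kextD h U = { ψ : PMF C | ψ.support.Finite ∧ ψ.map Sum.inl ∈ U } := by
  ext ψ
  constructor
  · rintro ⟨φ, hφ, Φ, hΦ, rfl⟩
    have key : (φ.bind fun w => (Φ w).bind id).map Sum.inl = φ := by
      rw [PMF.map_bind]
      refine (PMF.bind_congr_support φ _ PMF.pure ?_).trans φ.bind_pure
      rintro (c | d) hw
      · have hs := (hΦ _ hw).2
        rw [hinl] at hs
        rw [PMF.eq_pure_of_support_subset _ _ hs, PMF.pure_bind, id, PMF.pure_map]
      · have hs := (hΦ _ hw).2
        rw [hinr] at hs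
        exact absurd (Set.subset_empty_iff.1 hs) (Φ (Sum.inr d)).support_nonempty.ne_empty
    refine ⟨?_, by rwa [key]⟩
    have hfin := hU φ hφ
    rw [← key, PMF.support_map] at hfin
    exact hfin.of_finite_image Sum.inl_injective.injOn
  · rintro ⟨-, hψ⟩
    refine ⟨ψ.map Sum.inl, hψ, fun w => PMF.pure (Sum.elim PMF.pure (fun _ => ψ) w), ?_, ?_⟩
    · intro w hw
      rw [PMF.support_map] at hw
      obtain ⟨c, -, rfl⟩ := hw
      simp [hinl, PMF.support_pure]
    · simp only [PMF.pure_bind, id, PMF.bind_map]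
      exact ψ.bind_pure.symm
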